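/- In a variable-regular Tanner graph with variable node degree d_l = 3 and girth 6, the normal graph of a (6,0) elementary trapping set is a simple 3-regular graph on 6 vertices, and hence is isomorphic to either the prism graph or K_{3,3}. -/

import Mathlib

open SimpleGraph Finset

/-- Degree of a node `c` in the subgraph induced by the variable-node set `S`:
the number of neighbors of `c` inside `S`. -/
def degIn {V : Type} [DecidableEq V] (G : SimpleGraph V) [DecidableRel G.Adj]
    (S : Finset V) (c : V) : Nat :=
  (S.filter fun v => G.Adj c v).card

/-- The normal graph of an elementary trapping set `S`: variable nodes are adjacent iff
they share a degree-2 (satisfied) check node in the induced subgraph. -/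
def normalGraph {V : Type} [DecidableEq V] (G : SimpleGraph V) [DecidableRel G.Adj]
    (isVar : V → Prop) (S : Finset V) : SimpleGraph {x // x ∈ S} :=
  SimpleGraph.fromRel (fun u w =>
    ∃ c, ¬ isVar c ∧ degIn G S c = 2 ∧ G.Adj c u.1 ∧ G.Adj c w.1)

/-- Degree of a vertex in a (possibly nonconstructive) simple graph. -/
noncomputable def ndeg {W : Type} (H : SimpleGraph W) (v : W) : Nat :=
  (H.neighborSet v).ncard

/-- The prism graph `K_3 □ K_2`. -/
def prism : SimpleGraph (Fin 3 × Fin 2) :=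
  SimpleGraph.boxProd (⊤ : SimpleGraph (Fin 3)) (⊤ : SimpleGraph (Fin 2))

/-- The complete bipartite graph `K_{3,3}`. -/
def K33 : SimpleGraph (Fin 3 ⊕ Fin 3) := completeBipartiteGraph (Fin 3) (Fin 3)

/-- In a graph of girth greater than four, two distinct vertices have at most one common
neighbor. -/
lemma SimpleGraph.eq_of_adj_of_four_lt_egirth {V : Type*} {G : SimpleGraph V}
    (hG : 4 < G.egirth) {v w c d : V} (hvw : v ≠ w) (hvc : G.Adj v c) (hcw : G.Adj c w)
    (hvd : G.Adj v d) (hdw : G.Adj d w) : c = d := by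
  by_contra hcd
  let p : G.Walk v v := .cons hvc (.cons hcw (.cons hdw.symm (.cons hvd.symm .nil)))
  have hp : p.IsCycle := by
    have h1 := hvc.ne
    have h2 := hcw.ne
    have h3 := hvd.ne
    have h4 := hdw.ne
    simp only [p, Walk.cons_isCycle_iff, Walk.cons_isPath_iff, Walk.isPath_iff_nil,
      Walk.support_cons, Walk.support_nil, Walk.edges_cons, Walk.edges_nil, List.mem_cons,
      List.not_mem_nil, Sym2.eq_iff]
    grind
  have hle : G.egirth ≤ (p.length : ℕ∞) := le_egirth.mp le_rfl v p hp
  exact absurd (hG.trans_le hle) (by simp [p])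

/-- A degree-preserving injective homomorphism between finite graphs of the same order is an
isomorphism. -/
lemma SimpleGraph.nonempty_iso_of_injective_hom {W X : Type*} [Fintype W] [Fintype X]
    {G : SimpleGraph X} {H : SimpleGraph W} [DecidableRel G.Adj] [DecidableRel H.Adj]
    (f : X → W) (hf : Function.Injective f) (hcard : Fintype.card X = Fintype.card W)
    (hdeg : ∀ x, H.degree (f x) = G.degree x) (hadj : ∀ x y, G.Adj x y → H.Adj (f x) (f y)) :
    Nonempty (H ≃g G) := by
  classical
  have hbij : Function.Bijective f := (Fintype.bijective_iff_injective_and_card f).2 ⟨hf, hcard⟩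
  have himage (x : X) : (G.neighborFinset x).image f = H.neighborFinset (f x) := by
    apply Finset.eq_of_subset_of_card_le
    · intro w hw
      obtain ⟨y, hy, rfl⟩ := Finset.mem_image.1 hw
      simpa using hadj x y (by simpa using hy)
    · rw [Finset.card_image_of_injective _ hf, card_neighborFinset_eq_degree,
        card_neighborFinset_eq_degree, hdeg]
  refine ⟨RelIso.symm ⟨Equiv.ofBijective f hbij, ?_⟩⟩
  intro x y
  refine ⟨fun h => ?_, hadj x y⟩
  have hy : f y ∈ (G.neighborFinset x).image f := by
    rw [himage]
    simpa using h
  obtain ⟨z, hz, hzy⟩ := Finset.mem_image.1 hy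
  simpa [hf hzy] using hz

lemma degree_K33 [DecidableRel K33.Adj] (i : Fin 3 ⊕ Fin 3) : K33.degree i = 3 := by
  rw [← card_neighborFinset_eq_degree, neighborFinset_eq_filter]
  simp only [K33, completeBipartiteGraph_adj]
  revert i
  decide

lemma degree_prism [DecidableRel prism.Adj] (i : Fin 3 × Fin 2) : prism.degree i = 3 := by
  rw [← card_neighborFinset_eq_degree, neighborFinset_eq_filter]
  simp only [prism, boxProd_adj, top_adj]
  revert i
  decide

lemma SimpleGraph.nonempty_iso_K33 {W : Type*} [Fintype W] {H : SimpleGraph W}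
    [DecidableRel H.Adj] (hcard : Fintype.card W = 6) (hdeg : ∀ v, H.degree v = 3)
    (a b c x y z : W) (hnd : [a, b, c, x, y, z].Nodup)
    (h : ∀ u ∈ [a, b, c], ∀ v ∈ [x, y, z], H.Adj u v) : Nonempty (H ≃g K33) := by
  classical
  refine nonempty_iso_of_injective_hom (Sum.elim ![a, b, c] ![x, y, z]) ?_ (by simp [hcard]) ?_ ?_
  · intro i j
    simp only [List.nodup_cons, List.mem_cons, List.not_mem_nil] at hnd
    rcases i with i | i <;> rcases j with j | j <;> fin_cases i <;> fin_cases j <;>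
      simp <;> grind
  · intro i
    rw [hdeg, degree_K33]
  · simp only [List.mem_cons, List.not_mem_nil] at h
    intro i j
    rcases i with i | i <;> rcases j with j | j <;> fin_cases i <;> fin_cases j <;>
      simp [K33] <;> grind [H.adj_comm]

lemma SimpleGraph.nonempty_iso_prism {W : Type*} [Fintype W] {H : SimpleGraph W}
    [DecidableRel H.Adj] (hcard : Fintype.card W = 6) (hdeg : ∀ v, H.degree v = 3)
    (a x z y b c : W) (hnd : [a, x, z, y, b, c].Nodup)
    (h : ∀ e ∈ [(a, x), (a, z), (x, z), (y, b), (y, c), (b, c), (a, y), (x, b), (z, c)],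
      H.Adj e.1 e.2) : Nonempty (H ≃g prism) := by
  classical
  refine nonempty_iso_of_injective_hom (fun p => ![![a, y], ![x, b], ![z, c]] p.1 p.2) ?_
    (by simp [hcard]) ?_ ?_
  · rintro ⟨i, j⟩ ⟨k, l⟩
    simp only [List.nodup_cons, List.mem_cons, List.not_mem_nil] at hnd
    fin_cases i <;> fin_cases j <;> fin_cases k <;> fin_cases l <;> simp <;> grind
  · intro i
    rw [hdeg, degree_prism]
  · simp only [List.forall_mem_cons] at h
    clear hdeg hnd
    rintro ⟨i, j⟩ ⟨k, l⟩
    fin_cases i <;> fin_cases j <;> fin_cases k <;> fin_cases l <;>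
      simp [prism, boxProd_adj] <;> grind [H.adj_comm]

/-- A cubic simple graph on six vertices is the prism or `K_{3,3}`. -/
lemma SimpleGraph.nonempty_iso_prism_or_K33 {W : Type*} [Fintype W] (H : SimpleGraph W)
    [DecidableRel H.Adj] (hcard : Fintype.card W = 6) (hdeg : ∀ v, H.degree v = 3) :
    Nonempty (H ≃g prism) ∨ Nonempty (H ≃g K33) := by
  classical
  obtain ⟨a⟩ : Nonempty W := Fintype.card_pos_iff.1 (by omega)
  obtain ⟨x, y, z, hxy, hxz, hyz, hN⟩ := Finset.card_eq_three.1 (hdeg a)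
  have haN : a ∉ H.neighborFinset a := by simp
  have hrest : (insert a (H.neighborFinset a))ᶜ.card = 2 := by
    rw [Finset.card_compl, Finset.card_insert_of_notMem haN, hcard,
      card_neighborFinset_eq_degree, hdeg]
  obtain ⟨b, c, hbc, hR⟩ := Finset.card_eq_two.1 hrest
  have hmemN (w : W) : H.Adj a w ↔ w = x ∨ w = y ∨ w = z := by
    simpa using Finset.ext_iff.1 hN w
  have hmemR (w : W) : ¬ (w = a ∨ H.Adj a w) ↔ w = b ∨ w = c := by
    simpa using Finset.ext_iff.1 hR w
  have hax := H.ne_of_adj ((hmemN x).2 (by simp))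
  have hay := H.ne_of_adj ((hmemN y).2 (by simp))
  have haz := H.ne_of_adj ((hmemN z).2 (by simp))
  have hb := (hmemR b).2 (by simp)
  have hc := (hmemR c).2 (by simp)
  rw [hmemN] at hb hc
  have huniv : (Finset.univ : Finset W) = {a, x, y, z, b, c} := by
    ext w
    have h1 := hmemN w
    have h2 := hmemR w
    simp only [Finset.mem_univ, Finset.mem_insert, Finset.mem_singleton, true_iff]
    tauto
  have hsum (v : W) : (if H.Adj v a then 1 else 0) + ((if H.Adj v x then 1 else 0) +
      ((if H.Adj v y then 1 else 0) + ((if H.Adj v z then 1 else 0) +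
      ((if H.Adj v b then 1 else 0) + (if H.Adj v c then 1 else 0))))) = 3 := by
    rw [← hdeg v, ← card_neighborFinset_eq_degree, neighborFinset_eq_filter,
      Finset.card_filter, huniv, Finset.sum_insert (by grind), Finset.sum_insert (by grind),
      Finset.sum_insert (by grind), Finset.sum_insert (by grind), Finset.sum_insert (by grind),
      Finset.sum_singleton]
  have hx := hsum x
  have hy := hsum y
  have hz := hsum z
  have hb' := hsum b
  have hc' := hsum c
  have hAx := (hmemN x).2 (by simp)
  have hAy := (hmemN y).2 (by simp)
  have hAz := (hmemN z).2 (by simp)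
  have hAb : ¬ H.Adj a b := by grind
  have hAc : ¬ H.Adj a c := by grind
  simp only [H.adj_comm _ a, H.adj_comm b x, H.adj_comm b y, H.adj_comm b z, H.adj_comm c x,
    H.adj_comm c y, H.adj_comm c z, H.adj_comm c b, H.adj_comm y x, H.adj_comm z x,
    H.adj_comm z y, hAx, hAy, hAz, hAb, hAc, H.irrefl, if_true, if_false] at hx hy hz hb' hc'
  by_cases hBC : H.Adj b c
  · left
    simp only [hBC, if_true] at hb' hc'
    have key : ∃ p q r : W, (p = x ∧ q = y ∧ r = z ∨ p = x ∧ q = z ∧ r = y ∨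
        p = y ∧ q = x ∧ r = z ∨ p = y ∧ q = z ∧ r = x ∨ p = z ∧ q = x ∧ r = y ∨
        p = z ∧ q = y ∧ r = x) ∧
        H.Adj p b ∧ H.Adj p c ∧ H.Adj q b ∧ H.Adj r c ∧ H.Adj q r := by
      have : (H.Adj x b ∧ H.Adj x c ∧ H.Adj y b ∧ H.Adj z c ∧ H.Adj y z) ∨
          (H.Adj x b ∧ H.Adj x c ∧ H.Adj z b ∧ H.Adj y c ∧ H.Adj y z) ∨
          (H.Adj y b ∧ H.Adj y c ∧ H.Adj x b ∧ H.Adj z c ∧ H.Adj x z) ∨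
          (H.Adj y b ∧ H.Adj y c ∧ H.Adj z b ∧ H.Adj x c ∧ H.Adj x z) ∨
          (H.Adj z b ∧ H.Adj z c ∧ H.Adj x b ∧ H.Adj y c ∧ H.Adj x y) ∨
          (H.Adj z b ∧ H.Adj z c ∧ H.Adj y b ∧ H.Adj x c ∧ H.Adj x y) := by
        clear * - hx hy hz hb' hc'
        grind (splits := 20)
      have hcomm := H.adj_comm
      rcases this with h | h | h | h | h | h
      · exact ⟨x, y, z, by simp, h⟩
      · exact ⟨x, z, y, by simp, by rwa [hcomm z y]⟩
      · exact ⟨y, x, z, by simp, h⟩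
      · exact ⟨y, z, x, by simp, by rwa [hcomm z x]⟩
      · exact ⟨z, x, y, by simp, h⟩
      · exact ⟨z, y, x, by simp, by rwa [hcomm y x]⟩
    obtain ⟨p, q, r, hpqr, hpb, hpc, hqb, hrc, hqr⟩ := key
    refine nonempty_iso_prism hcard hdeg a q r p b c (by grind) ?_
    simp only [List.forall_mem_cons]
    grind
  · right
    refine nonempty_iso_K33 hcard hdeg a b c x y z (by grind) ?_
    have hall : H.Adj x b ∧ H.Adj y b ∧ H.Adj z b ∧ H.Adj x c ∧ H.Adj y c ∧ H.Adj z c := by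
      simp only [hBC, if_false] at hb' hc'
      grind
    simp only [List.mem_cons, List.not_mem_nil]
    grind [H.adj_comm]

lemma ndeg_normalGraph_eq_three {V : Type} [Fintype V] [DecidableEq V]
    (G : SimpleGraph V) [DecidableRel G.Adj] (isVar : V → Prop)
    (hbip : ∀ u v, G.Adj u v → (isVar u ↔ ¬ isVar v))
    (hreg : ∀ v, isVar v → G.degree v = 3) (hgirth : 4 < G.egirth)
    (S : Finset V) (hSvar : ∀ v ∈ S, isVar v)
    (hets : ∀ c, ¬ isVar c → degIn G S c ≤ 2) (hb : ∀ c, ¬ isVar c → degIn G S c ≠ 1)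
    (v : {x // x ∈ S}) : ndeg (normalGraph G isVar S) v = 3 := by
  obtain ⟨v, hv⟩ := v
  have hcheck (c : V) (hc : G.Adj v c) : ¬ isVar c := (hbip v c hc).1 (hSvar v hv)
  have hdeg (c : V) (hc : G.Adj v c) : degIn G S c = 2 := by
    have h1 := hets c (hcheck c hc)
    have h2 := hb c (hcheck c hc)
    have h3 : 0 < degIn G S c := Finset.card_pos.2 ⟨v, by simp [hv, hc.symm]⟩
    omega
  have hother (c : V) (hc : G.Adj v c) : ∃ w : {x // x ∈ S}, w.1 ≠ v ∧ G.Adj c w ∧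
      ∀ u ∈ S, G.Adj c u → u ≠ v → u = w := by
    obtain ⟨w, hw, hwv⟩ := Finset.exists_mem_ne (s := S.filter fun u => G.Adj c u)
      (by have := hdeg c hc; unfold degIn at this; omega) v
    rw [Finset.mem_filter] at hw
    refine ⟨⟨w, hw.1⟩, hwv, hw.2, fun u hu hcu huv => ?_⟩
    by_contra huw
    have hsub : ({v, w, u} : Finset V) ⊆ S.filter fun u => G.Adj c u := by
      have := hc.symm
      grind
    have hle := Finset.card_le_card hsub
    rw [Finset.card_eq_three.2 ⟨v, w, u, hwv.symm, Ne.symm huv, Ne.symm huw, rfl⟩] at hle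
    have := hdeg c hc
    unfold degIn at this
    omega
  choose f hfv hfadj hfuniq using hother
  have hcongr : (G.neighborSet v).ncard = ((normalGraph G isVar S).neighborSet ⟨v, hv⟩).ncard := by
    refine Set.ncard_congr f ?_ ?_ ?_
    · intro c hc
      simp only [mem_neighborSet, normalGraph, fromRel_adj]
      exact ⟨fun h => hfv c hc (congrArg Subtype.val h).symm,
        .inl ⟨c, hcheck c hc, hdeg c hc, hc.symm, hfadj c hc⟩⟩
    · intro c d hc hd hcd
      exact eq_of_adj_of_four_lt_egirth hgirth (hfv c hc).symm hc (hfadj c hc) hd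
        (hcd ▸ hfadj d hd)
    · intro w hw
      simp only [mem_neighborSet, normalGraph, fromRel_adj] at hw
      obtain ⟨c, hcv, hcw⟩ : ∃ c, G.Adj v c ∧ G.Adj c w := by
        rcases hw.2 with ⟨c, -, -, h1, h2⟩ | ⟨c, -, -, h1, h2⟩
        · exact ⟨c, h1.symm, h2⟩
        · exact ⟨c, h2.symm, h1⟩
      exact ⟨c, hcv, (Subtype.ext (hfuniq c hcv w w.2 hcw fun h => hw.1 (Subtype.ext h.symm))).symm⟩
  rw [ndeg, ← hcongr, Set.ncard_eq_toFinset_card', ← neighborFinset_def,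
    card_neighborFinset_eq_degree, hreg v (hSvar v hv)]

theorem stmt8 {V : Type} [Fintype V] [DecidableEq V]
    (G : SimpleGraph V) [DecidableRel G.Adj]
    (isVar : V → Prop) [DecidablePred isVar]
    (hbip : ∀ u v, G.Adj u v → (isVar u ↔ ¬ isVar v))
    (hreg : ∀ v, isVar v → G.degree v = 3)
    (hgirth : G.egirth = 6)
    (S : Finset V) (hSvar : ∀ v ∈ S, isVar v) (hS6 : S.card = 6)
    (hets : ∀ c, ¬ isVar c → degIn G S c ≤ 2)
    (hb : (univ.filter fun c => ¬ isVar c ∧ degIn G S c = 1).card = 0) :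
    (∀ v, ndeg (normalGraph G isVar S) v = 3) ∧
    (Nonempty (normalGraph G isVar S ≃g prism) ∨
      Nonempty (normalGraph G isVar S ≃g K33)) := by
  classical
  have hndeg : ∀ v, ndeg (normalGraph G isVar S) v = 3 := by
    refine ndeg_normalGraph_eq_three G isVar hbip hreg (by rw [hgirth]; decide) S hSvar hets ?_
    intro c hc h1
    rw [Finset.card_eq_zero] at hb
    exact Finset.notMem_empty c (hb ▸ by simp [hc, h1])
  refine ⟨hndeg, nonempty_iso_prism_or_K33 _ (by simpa using hS6) fun v => ?_⟩
  rw [← hndeg v, ndeg, Set.ncard_eq_toFinset_card', ← neighborFinset_def,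
    card_neighborFinset_eq_degree]
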